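/- arXiv:2107.13768 — 3 statements merged into one kernel-verified Lean document; each statement's English description precedes it below -/
import Mathlib

section
/- Let κ > 0 and c > 2κ. Then there exists a function φ : ℝ → ℝ which is infinitely differentiable, even, strictly positive, strictly decreasing on (0,∞), tends to 0 at ±∞, and satisfies for every x ∈ ℝ the first-integral equation ½(c − φ(x))² φ'(x)² = φ(x)² ( ½φ(x)² − c φ(x) + (2/3)κ φ(x) + ½c² − κc ); moreover there is a constant C > 0 such that |φ(x)| ≤ C e^{−√(1 − 2κ/c) |x|} for all x ∈ ℝ. -/
open MeasureTheory Real Filter Finset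
open scoped ENNReal

noncomputable section

/-- The kernel `p(x) = ½ e^{-|x|}` of `(1 - ∂ₓ²)⁻¹` on `ℝ`. -/
def pker (x : ℝ) : ℝ := (1/2) * Real.exp (-|x|)

/-- The kernel `q(x) = ¼ e^{-2|x|}` of `(4 - ∂ₓ²)⁻¹` on `ℝ`. -/
def qker (x : ℝ) : ℝ := (1/4) * Real.exp (-(2*|x|))

/-- Convolution of two functions on `ℝ`. -/
def convol (f g : ℝ → ℝ) (x : ℝ) : ℝ := ∫ y, f (x - y) * g y

/-- `u` is a pointwise classical solution of the Degasperis-Procesi equation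
`∂ₜ u + ∂ₓ(½u² + p*((3/2)u² + 2κu)) = 0` for times `t ∈ T`. -/
def IsDPSolution (κ : ℝ) (T : Set ℝ) (u : ℝ → ℝ → ℝ) : Prop :=
  ∀ t ∈ T, ∀ x : ℝ,
    HasDerivAt (fun s => u s x)
      (-(deriv (fun y => (1/2) * (u t y)^2
          + convol pker (fun z => (3/2) * (u t z)^2 + 2*κ*(u t z)) y) x)) t

/-- The `c`-speed smooth solitary-wave profile of the DP equation:  even, smooth,
positive, strictly decreasing on `(0,∞)`, decaying at `±∞` and satisfying the
first-integral equation. -/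
structure IsSoliton (κ c : ℝ) (φ : ℝ → ℝ) : Prop where
  smooth : ContDiff ℝ (⊤ : ℕ∞) φ
  even : ∀ x, φ (-x) = φ x
  pos : ∀ x, 0 < φ x
  anti : StrictAntiOn φ (Set.Ioi 0)
  decay_top : Tendsto φ atTop (nhds 0)
  decay_bot : Tendsto φ atBot (nhds 0)
  eqn : ∀ x, (1/2)*(c - φ x)^2 * (deriv φ x)^2
      = (φ x)^2 * ((1/2)*(φ x)^2 - c * φ x + (2/3)*κ*(φ x) + (1/2)*c^2 - κ*c)

lemma core (a b c μ r : ℝ) (ha : 0 < a) (hac : a < c) (hμ : 0 < μ) (hμ1 : μ < 1)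
    (hr : 0 < r) (hr1 : r < 1) (h1 : μ * r * c = a) (h2 : r^2 * b = a) (h3 : μ^2*c^2 = a*b) :
    ∃ φ : ℝ → ℝ,
      ContDiff ℝ (⊤ : ℕ∞) φ ∧ (∀ x, φ (-x) = φ x) ∧ (∀ x, 0 < φ x) ∧
      StrictAntiOn φ (Set.Ioi 0) ∧
      (∀ x : ℝ, (1/2)*(c - φ x)^2 * (deriv φ x)^2
        = (φ x)^2 * ((1/2)*(a - φ x)*(b - φ x))) ∧
      ∃ C > 0, ∀ x : ℝ, |φ x| ≤ C * Real.exp (-μ * |x|) := by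
  have hS : ∀ y, |sinh y| < cosh y := by
    intro y
    rw [abs_lt]
    have := Real.cosh_sub_sinh y
    have := Real.cosh_add_sinh y
    have := Real.exp_pos y
    have := Real.exp_pos (-y)
    constructor <;> linarith
  have hrS : ∀ y, |r * sinh y| ≤ r * cosh y := by
    intro y
    rw [abs_mul, abs_of_pos hr]
    exact mul_le_mul_of_nonneg_left (hS y).le hr.le
  have hC : ∀ y, 0 < cosh y := Real.cosh_pos
  have hP : ∀ y, (1 - r) * cosh y ≤ cosh y + r * sinh y := fun y => by
    have := (abs_le.1 (hrS y)).1; linarith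
  have hP' : ∀ y, cosh y + r * sinh y ≤ (1 + r) * cosh y := fun y => by
    have := (abs_le.1 (hrS y)).2; linarith
  have hM : ∀ y, (1 - r) * cosh y ≤ cosh y - r * sinh y := fun y => by
    have := (abs_le.1 (hrS y)).2; linarith
  have hM' : ∀ y, cosh y - r * sinh y ≤ (1 + r) * cosh y := fun y => by
    have := (abs_le.1 (hrS y)).1; linarith
  have h1r : 0 < 1 - r := by linarith
  have hpp : ∀ y, 0 < (1 - r) * cosh y := fun y => mul_pos h1r (hC y)
  have hP0 : ∀ y, 0 < cosh y + r * sinh y := fun y => (hpp y).trans_le (hP y)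
  have hM0 : ∀ y, 0 < cosh y - r * sinh y := fun y => (hpp y).trans_le (hM y)
  set K : ℝ := log (1 + r) - log (1 - r) with hK
  have hL : ∀ y, |log (cosh y + r * sinh y) - log (cosh y - r * sinh y)| ≤ K := by
    intro y
    have e1 := Real.log_le_log (hpp y) (hP y)
    have e2 := Real.log_le_log (hpp y) (hM y)
    have e3 := Real.log_le_log (hP0 y) (hP' y)
    have e4 := Real.log_le_log (hM0 y) (hM' y)
    rw [Real.log_mul (by linarith) (hC y).ne'] at e1 e2 e3 e4
    rw [abs_le]; constructor <;> linarith
  set X : ℝ → ℝ := fun y => 2/μ * y - (log (cosh y + r * sinh y) - log (cosh y - r * sinh y)) with hX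
  set D : ℝ → ℝ := fun y => 1 + (1 - r^2) * sinh y ^ 2 with hD
  have hr2 : 0 < 1 - r^2 := by nlinarith
  have hD1 : ∀ y, 1 ≤ D y := fun y => by
    have : 0 ≤ (1 - r^2) * sinh y ^ 2 := by positivity
    simp only [hD]; linarith
  have hD0 : ∀ y, 0 < D y := fun y => lt_of_lt_of_le one_pos (hD1 y)
  have hμr : μ * r < 1 := by nlinarith
  have hDm : ∀ y, 0 < D y - μ * r := fun y => by linarith [hD1 y]
  have hX' : ∀ y, HasDerivAt X (2 * (D y - μ * r) / (μ * D y)) y := by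
    intro y
    have d1 := ((Real.hasDerivAt_cosh y).add ((Real.hasDerivAt_sinh y).const_mul r)).log (hP0 y).ne'
    have d2 := ((Real.hasDerivAt_cosh y).sub ((Real.hasDerivAt_sinh y).const_mul r)).log (hM0 y).ne'
    have d3 := ((hasDerivAt_id y).const_mul (2/μ)).sub (d1.sub d2)
    refine d3.congr_deriv ?_
    have hDe : D y = (cosh y + r * sinh y) * (cosh y - r * sinh y) := by
      have := Real.cosh_sq y
      simp only [hD]; linear_combination -this
    have q1 := (hP0 y).ne'
    have q2 := (hM0 y).ne'
    have e : (sinh y + r * cosh y) / (cosh y + r * sinh y) - (sinh y - r * cosh y) / (cosh y - r * sinh y) = 2 * r / D y := by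
      rw [div_sub_div _ _ q1 q2, ← hDe]
      congr 1
      have := Real.cosh_sq y
      linear_combination 2 * r * this
    have q3 := (hD0 y).ne'
    simp only [Pi.add_apply, Pi.sub_apply]
    rw [e]
    field_simp
  have hXpos : ∀ y, 0 < 2 * (D y - μ * r) / (μ * D y) := fun y => by
    have := hDm y
    have := hD0 y
    positivity
  have hXc : ContDiff ℝ (⊤ : ℕ∞) X := by
    refine (contDiff_const.mul contDiff_id).sub (ContDiff.sub ?_ ?_)
    · exact (Real.contDiff_cosh.add (contDiff_const.mul Real.contDiff_sinh)).log (fun y => (hP0 y).ne')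
    · exact (Real.contDiff_cosh.sub (contDiff_const.mul Real.contDiff_sinh)).log (fun y => (hM0 y).ne')
  have hXm : StrictMono X := strictMono_of_deriv_pos fun y => by
    rw [(hX' y).deriv]; exact hXpos y
  have hμ2 : 0 < 2/μ := by positivity
  have hXs : Function.Surjective X := by
    apply hXc.continuous.surjective
    · refine tendsto_atTop_mono (f := fun y => 2/μ * y - K) ?_ ?_
      · intro y; have := (abs_le.1 (hL y)).2; simp only [hX]; linarith
      · exact tendsto_atTop_add_const_right _ _ (tendsto_id.const_mul_atTop hμ2)
    · refine tendsto_atBot_mono (f := fun y => 2/μ * y + K) ?_ ?_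
      · intro y; have := (abs_le.1 (hL y)).1; simp only [hX]; linarith
      · exact tendsto_atBot_add_const_right _ _ (tendsto_id.const_mul_atBot hμ2)
  set e : ℝ ≃o ℝ := hXm.orderIsoOfSurjective X hXs with he
  have hee : ∀ y, e y = X y := fun y => rfl
  set Y : ℝ → ℝ := fun x => e.symm x with hY
  have hXY : ∀ x, X (Y x) = x := fun x => e.apply_symm_apply x
  have hYX : ∀ x, Y (X x) = x := fun x => e.symm_apply_apply x
  have hYm : StrictMono Y := e.symm.strictMono
  have hYc : ContDiff ℝ (⊤ : ℕ∞) Y :=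
    e.toHomeomorph.contDiff_symm_deriv (f' := fun y => 2 * (D y - μ * r) / (μ * D y))
      (fun y => (hXpos y).ne') hX' hXc
  have hXodd : ∀ y, X (-y) = - X y := fun y => by
    simp only [hX, Real.cosh_neg, Real.sinh_neg, mul_neg, sub_neg_eq_add, ← sub_eq_add_neg]; ring
  have hYodd : ∀ x, Y (-x) = - Y x := fun x => by
    apply hXm.injective; rw [hXodd, hXY, hXY]
  have hX0 : X 0 = 0 := by simp [hX]
  have hY0 : Y 0 = 0 := by rw [← hX0, hYX, hX0]
  have hDd : ∀ y, HasDerivAt D (2 * (1 - r^2) * sinh y * cosh y) y := fun y => by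
    have := (((Real.hasDerivAt_sinh y).pow 2).const_mul (1 - r^2)).const_add 1
    refine this.congr_deriv ?_
    push_cast; ring
  have hDc : ContDiff ℝ (⊤ : ℕ∞) D :=
    contDiff_const.add (contDiff_const.mul (Real.contDiff_sinh.pow 2))
  have hYd : ∀ x, HasDerivAt Y ((2 * (D (Y x) - μ * r) / (μ * D (Y x)))⁻¹) x := fun x =>
    HasDerivAt.of_local_left_inverse hYc.continuous.continuousAt (hX' (Y x)) (hXpos _).ne'
      (Eventually.of_forall hXY)
  refine ⟨fun x => a / D (Y x), ?_, ?_, ?_, ?_, ?_, ?_⟩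
  · exact contDiff_const.div (hDc.comp hYc) (fun x => (hD0 _).ne')
  · intro x; simp only [hYodd, hD, Real.sinh_neg, neg_sq]
  · intro x; exact div_pos ha (hD0 _)
  · intro x hx y hy hxy
    have hx0 : 0 < Y x := by rw [← hY0]; exact hYm hx
    have s1 : 0 < sinh (Y x) := Real.sinh_pos_iff.2 hx0
    have s2 : sinh (Y x) < sinh (Y y) := Real.sinh_lt_sinh.2 (hYm hxy)
    refine div_lt_div_of_pos_left ha (hD0 _) ?_
    simp only [hD]
    have : sinh (Y x) ^ 2 < sinh (Y y) ^ 2 := by nlinarith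
    have := mul_lt_mul_of_pos_left this hr2
    linarith
  · intro x
    have dd := ((hasDerivAt_const x a).div ((hDd (Y x)).comp x (hYd x)) (hD0 _).ne').deriv
    have hD' := (hD0 (Y x)).ne'
    have hDm' := (hDm (Y x)).ne'
    have dd2 : deriv (fun x => a / D (Y x)) x =
        - (a * μ * (1 - r^2) * sinh (Y x) * cosh (Y x)) / (D (Y x) * (D (Y x) - μ * r)) := by
      refine Eq.trans dd ?_
      simp only [Function.comp]
      field_simp
      ring
    rw [dd2]
    have k1 : c - a / D (Y x) = c * (D (Y x) - μ * r) / D (Y x) := by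
      field_simp; linear_combination h1
    have k2 : a - a / D (Y x) = a * ((1 - r^2) * sinh (Y x)^2) / D (Y x) := by
      have : D (Y x) - 1 = (1 - r^2) * sinh (Y x)^2 := by simp only [hD]; ring
      rw [← this]; field_simp
    have k3 : b - a / D (Y x) = b * ((1 - r^2) * cosh (Y x)^2) / D (Y x) := by
      have : D (Y x) - r^2 = (1 - r^2) * cosh (Y x)^2 := by
        rw [Real.cosh_sq]; simp only [hD]; ring
      rw [← this]; field_simp; linear_combination h2
    rw [k1, k2, k3]
    beta_reduce
    generalize D (Y x) = d at *
    have : (1/2)*(c * (d - μ * r) / d)^2 * (- (a * μ * (1 - r^2) * sinh (Y x) * cosh (Y x)) / (d * (d - μ * r)))^2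
       = (μ^2*c^2) * ((1/2) * (a * (1 - r^2) * sinh (Y x) * cosh (Y x))^2 / d^4) := by
      field_simp
    rw [this, h3]
    field_simp
  · refine ⟨a * (4 / (1 - r^2)) * exp (μ * K), by positivity, ?_⟩
    intro x
    rw [abs_of_pos (div_pos ha (hD0 _))]
    set y := Y x with hy
    have hx : |x| ≤ 2/μ * |y| + K := by
      have : x = 2/μ * y - (log (cosh y + r * sinh y) - log (cosh y - r * sinh y)) := (hXY x).symm
      rw [this]
      refine (abs_sub _ _).trans ?_
      rw [abs_mul, abs_of_pos hμ2]
      linarith [hL y]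
    have hx2 : μ * |x| ≤ 2 * |y| + μ * K := by
      have := mul_le_mul_of_nonneg_left hx hμ.le
      have e : μ * (2/μ * |y| + K) = 2 * |y| + μ * K := by field_simp
      linarith
    have hcosh : exp |y| ≤ 2 * cosh y := by
      rw [← Real.cosh_abs, Real.cosh_eq]; have := Real.exp_pos (-|y|); linarith
    have hDl : (1 - r^2) / 4 * exp (2 * |y|) ≤ D y := by
      have : D y = (1 - r^2) * cosh y^2 + r^2 := by
        rw [Real.cosh_sq]; simp only [hD]; ring
      have e2 : exp (2 * |y|) = exp |y| ^ 2 := by rw [← Real.exp_nat_mul]; norm_num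
      have e3 : exp |y| ^ 2 ≤ (2 * cosh y)^2 := by gcongr
      rw [e2, this]
      have := mul_le_mul_of_nonneg_left e3 hr2.le
      nlinarith
    have hE : exp (μ * |x|) ≤ exp (2 * |y|) * exp (μ * K) := by
      rw [← Real.exp_add]; exact Real.exp_le_exp.2 hx2
    rw [neg_mul, Real.exp_neg, div_le_iff₀ (hD0 _)]
    have p := Real.exp_pos (μ * |x|)
    have pk := Real.exp_pos (μ * K)
    have q : exp (μ * |x|) ≤ 4 / (1 - r^2) * exp (μ * K) * D y := by
      calc _ ≤ exp (2 * |y|) * exp (μ * K) := hE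
        _ = 4 / (1 - r^2) * exp (μ * K) * ((1 - r^2) / 4 * exp (2 * |y|)) := by field_simp
        _ ≤ _ := by gcongr
    have : a * (4 / (1 - r^2)) * exp (μ * K) * (exp (μ * |x|))⁻¹ * D y
       = a * ((4 / (1 - r^2) * exp (μ * K) * D y) / exp (μ * |x|)) := by field_simp
    rw [this]
    have : 1 ≤ (4 / (1 - r^2) * exp (μ * K) * D y) / exp (μ * |x|) := (one_le_div p).2 q
    nlinarith

/-- existence of a smooth solitary-wave profile for the DP equation,
with exponential decay rate `e^{-√(1-2κ/c)|x|}`. -/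
theorem stmt_0 (κ c : ℝ) (hκ : 0 < κ) (hc : 2*κ < c) :
    ∃ φ : ℝ → ℝ,
      ContDiff ℝ (⊤ : ℕ∞) φ ∧ (∀ x, φ (-x) = φ x) ∧ (∀ x, 0 < φ x) ∧
      StrictAntiOn φ (Set.Ioi 0) ∧
      Tendsto φ atTop (nhds 0) ∧ Tendsto φ atBot (nhds 0) ∧
      (∀ x : ℝ, (1/2)*(c - φ x)^2 * (deriv φ x)^2
        = (φ x)^2 * ((1/2)*(φ x)^2 - c * φ x + (2/3)*κ*(φ x) + (1/2)*c^2 - κ*c)) ∧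
      ∃ C > 0, ∀ x : ℝ, |φ x| ≤ C * Real.exp (-(Real.sqrt (1 - 2*κ/c)) * |x|) := by
  have hc0 : 0 < c := by linarith
  set d := Real.sqrt (4*κ^2/9 + 2*κ*c/3) with hd
  have hd2 : d^2 = 4*κ^2/9 + 2*κ*c/3 := Real.sq_sqrt (by positivity)
  have hd0 : 0 < d := Real.sqrt_pos.2 (by positivity)
  set μ := Real.sqrt (1 - 2*κ/c) with hμ
  have hq : 2*κ/c < 1 := (div_lt_one hc0).2 hc
  have hq0 : 0 < 2*κ/c := by positivity
  have hμ2 : μ^2 = 1 - 2*κ/c := Real.sq_sqrt (by linarith)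
  have hμ0 : 0 < μ := Real.sqrt_pos.2 (by linarith)
  have hμ1 : μ < 1 := by nlinarith
  have h3' : μ^2*c^2 = c^2 - 2*κ*c := by rw [hμ2]; field_simp
  obtain ⟨a, hadef⟩ : ∃ a, a = c - 2*κ/3 - d := ⟨_, rfl⟩
  obtain ⟨b, hbdef⟩ : ∃ b, b = c - 2*κ/3 + d := ⟨_, rfl⟩
  have hab : a * b = c^2 - 2*κ*c := by rw [hadef, hbdef]; linear_combination -hd2
  have hb : 0 < b := by rw [hbdef]; linarith
  have hab0 : 0 < a * b := by rw [hab]; nlinarith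
  have ha : 0 < a := pos_of_mul_pos_left hab0 hb.le
  have hac : a < c := by rw [hadef]; linarith
  have hlt : a < b := by rw [hadef, hbdef]; linarith
  have h3 : μ^2*c^2 = a*b := by rw [h3', hab]
  have hμc : 0 < μ * c := by positivity
  have hr2 : (a/(μ*c))^2 * b = a := by
    have : (a/(μ*c))^2 * b = a * (a * b) / (μ^2*c^2) := by field_simp
    rw [this, h3]; field_simp
  have hr0 : 0 < a/(μ*c) := by positivity
  have hr1 : a/(μ*c) < 1 := by
    by_contra h
    push Not at h
    have : 1 ≤ (a/(μ*c))^2 := by nlinarith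
    nlinarith
  obtain ⟨φ, s1, s2, s3, s4, s5, C, hC, s6⟩ := core a b c μ (a/(μ*c)) ha hac hμ0 hμ1 hr0 hr1
    (by field_simp) hr2 h3
  have t1 : ∀ l : Filter ℝ, Tendsto (fun x : ℝ => |x|) l atTop → Tendsto φ l (nhds 0) := by
    intro l hl
    refine squeeze_zero_norm (a := fun x => C * Real.exp (-μ * |x|)) (fun x => s6 x) ?_
    have : Tendsto (fun x : ℝ => -μ * |x|) l atBot := hl.const_mul_atTop_of_neg (by linarith)
    simpa using (Real.tendsto_exp_atBot.comp this).const_mul C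
  refine ⟨φ, s1, s2, s3, s4, t1 _ tendsto_abs_atTop_atTop, t1 _ tendsto_abs_atBot_atTop, ?_, C, hC, s6⟩
  intro x
  rw [s5 x]
  have hs : a + b = 2*c - 4*κ/3 := by rw [hadef, hbdef]; ring
  linear_combination (φ x)^2 * (1/2) * hab - (φ x)^3 * (1/2) * hs
end
end

section
/- Let B ≥ 2 and define ψ : ℝ → ℝ by ψ(x) = (2/π) arctan( e^{x/B} ). Then: 0 < ψ(x) < 1 for all x; ψ is strictly increasing (ψ'(x) > 0 for all x); for all x ∈ ℝ, |ψ''''(x)| ≤ (3/B³) ψ'(x), |ψ'''(x)| ≤ (1/B²) ψ'(x), and ψ''(x) ≤ (1/B) ψ'(x); and there exists an absolute constant C > 0 (independent of B) such that |ψ^{(k)}(x)| ≤ C e^{−|x|/B} for k = 1, 2, 3, 4 and all x ∈ ℝ. -/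
open MeasureTheory Real Filter

noncomputable section

lemma aux_p (B : ℝ) (hB : 0 < B) (x : ℝ) :
    HasDerivAt (fun x : ℝ => exp (x/B) / (1 + exp (x/B)^2))
      (-(exp (x/B) / (1 + exp (x/B)^2)) * ((exp (x/B)^2 - 1) / (exp (x/B)^2 + 1)) / B) x := by
  have hE : HasDerivAt (fun x : ℝ => exp (x/B)) (exp (x/B) * (1 / B)) x :=
    ((hasDerivAt_id x).div_const B).exp
  have h := hE.div ((hE.fun_pow 2).const_add 1) (by positivity)
  refine h.congr_deriv ?_
  have := exp_pos (x/B)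
  generalize exp (x/B) = E at *
  have h1 : (1 + E^2) ≠ 0 := by positivity
  have h2 : (E^2 + 1) ≠ 0 := by positivity
  field_simp
  push_cast
  ring

lemma aux_t (B : ℝ) (hB : 0 < B) (x : ℝ) :
    HasDerivAt (fun x : ℝ => (exp (x/B)^2 - 1) / (exp (x/B)^2 + 1))
      ((1 - ((exp (x/B)^2 - 1) / (exp (x/B)^2 + 1))^2) / B) x := by
  have hE : HasDerivAt (fun x : ℝ => exp (x/B)) (exp (x/B) * (1 / B)) x :=
    ((hasDerivAt_id x).div_const B).exp
  have h := ((hE.fun_pow 2).sub_const 1).div ((hE.fun_pow 2).add_const 1) (by positivity)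
  refine h.congr_deriv ?_
  have := exp_pos (x/B)
  generalize exp (x/B) = E at *
  have h2 : (E^2 + 1) ≠ 0 := by positivity
  field_simp
  push_cast
  ring

lemma aux_psi (B : ℝ) (hB : 0 < B) (x : ℝ) :
    HasDerivAt (fun x : ℝ => (2/π) * Real.arctan (Real.exp (x/B)))
      (2/(π*B) * (exp (x/B) / (1 + exp (x/B)^2))) x := by
  have hE : HasDerivAt (fun x : ℝ => exp (x/B)) (exp (x/B) * (1 / B)) x :=
    ((hasDerivAt_id x).div_const B).exp
  refine (hE.arctan.const_mul (2/π)).congr_deriv ?_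
  have h1 : (1 + exp (x/B)^2) ≠ 0 := by positivity
  field_simp

lemma aux_decay (B : ℝ) (hB : 0 < B) (x : ℝ) :
    exp (x/B) / (1 + exp (x/B)^2) ≤ exp (-|x|/B) := by
  have h := exp_pos (x/B)
  rw [div_le_iff₀ (by positivity)]
  rcases le_total 0 x with hx | hx
  · rw [abs_of_nonneg hx, neg_div, exp_neg]
    field_simp
    linarith
  · rw [abs_of_nonpos hx, neg_neg]
    nlinarith [mul_pos h (pow_pos h 2)]

/-- properties of the localizing weight `ψ(x) = (2/π)arctan(e^{x/B})`
for `B ≥ 2`: values in `(0,1)`, strict monotonicity, the derivative bounds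
`|ψ''''| ≤ (3/B³)ψ'`, `|ψ'''| ≤ (1/B²)ψ'`, `ψ'' ≤ (1/B)ψ'`, and exponential decay
`|ψ^{(k)}(x)| ≤ C e^{-|x|/B}` (`k = 1,…,4`) with `C` independent of `B`. -/
theorem stmt_17 :
    ∃ C > 0, ∀ B : ℝ, 2 ≤ B →
      ∀ ψ : ℝ → ℝ, (∀ x, ψ x = (2/π) * Real.arctan (Real.exp (x/B))) →
        (∀ x, 0 < ψ x ∧ ψ x < 1) ∧
        StrictMono ψ ∧
        (∀ x, 0 < deriv ψ x) ∧
        (∀ x, |iteratedDeriv 4 ψ x| ≤ (3/B^3) * deriv ψ x) ∧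
        (∀ x, |iteratedDeriv 3 ψ x| ≤ (1/B^2) * deriv ψ x) ∧
        (∀ x, iteratedDeriv 2 ψ x ≤ (1/B) * deriv ψ x) ∧
        (∀ k : ℕ, 1 ≤ k → k ≤ 4 → ∀ x, |iteratedDeriv k ψ x| ≤ C * Real.exp (-|x|/B)) := by
  refine ⟨3, by norm_num, ?_⟩
  intro B hB2 ψ hψ
  have hB : 0 < B := by linarith
  obtain rfl : ψ = fun x => (2/π) * Real.arctan (Real.exp (x/B)) := funext hψ
  clear hψ
  set ψ : ℝ → ℝ := fun x => (2/π) * Real.arctan (Real.exp (x/B)) with hψ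
  obtain ⟨p, hp⟩ : ∃ p : ℝ → ℝ, p = fun x => exp (x/B) / (1 + exp (x/B)^2) := ⟨_, rfl⟩
  obtain ⟨t, ht⟩ : ∃ t : ℝ → ℝ, t = fun x => (exp (x/B)^2 - 1) / (exp (x/B)^2 + 1) := ⟨_, rfl⟩
  obtain ⟨c, hc⟩ : ∃ c : ℝ, c = 2/(π*B) := ⟨_, rfl⟩
  have dp : ∀ x, HasDerivAt p (-(p x) * t x / B) x := by
    intro x; subst hp ht; exact aux_p B hB x
  have dt : ∀ x, HasDerivAt t ((1 - t x ^ 2) / B) x := by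
    intro x; subst ht; exact aux_t B hB x
  have dψ : ∀ x, HasDerivAt ψ (c * p x) x := by
    intro x; subst hp hc; exact aux_psi B hB x
  have hdec : ∀ x, p x ≤ exp (-|x|/B) := by
    intro x; subst hp; exact aux_decay B hB x
  have ppos : ∀ x, 0 < p x := by
    intro x; subst hp; positivity
  have tlt : ∀ x, t x ^ 2 ≤ 1 := by
    intro x; subst ht
    have := exp_pos (x/B)
    rw [sq_le_one_iff_abs_le_one, abs_le]
    constructor
    · rw [le_div_iff₀ (by positivity)]; nlinarith
    · rw [div_le_iff₀ (by positivity)]; nlinarith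
  have cpos : 0 < c := by rw [hc]; positivity
  have cle : c ≤ 1 := by
    rw [hc, div_le_one (by positivity)]
    nlinarith [Real.pi_gt_three]
  have e1 : deriv ψ = fun x => c * p x := funext fun x => (dψ x).deriv
  have e2 : deriv (fun x => c * p x) = fun x => (1/B) * (c * p x) * (-t x) := by
    funext x
    rw [((dp x).const_mul c).deriv]; field_simp
  have e3 : deriv (fun x => (1/B) * (c * p x) * (-t x)) =
      fun x => (1/B^2) * (c * p x) * (2 * t x ^ 2 - 1) := by
    funext x
    rw [((((dp x).const_mul c).const_mul (1/B)).fun_mul (dt x).fun_neg).deriv]; field_simp; ring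
  have e4 : deriv (fun x => (1/B^2) * (c * p x) * (2 * t x ^ 2 - 1)) =
      fun x => (1/B^3) * (c * p x) * (5 * t x - 6 * t x ^ 3) := by
    funext x
    rw [((((dp x).const_mul c).const_mul (1/B^2)).fun_mul
      ((((dt x).fun_pow 2).const_mul 2).sub_const 1)).deriv]
    field_simp; push_cast; ring
  have i1 : iteratedDeriv 1 ψ = fun x => c * p x := by rw [iteratedDeriv_one, e1]
  have i2 : iteratedDeriv 2 ψ = fun x => (1/B) * (c * p x) * (-t x) := by
    rw [iteratedDeriv_succ, i1, e2]
  have i3 : iteratedDeriv 3 ψ = fun x => (1/B^2) * (c * p x) * (2 * t x ^ 2 - 1) := by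
    rw [iteratedDeriv_succ, i2, e3]
  have i4 : iteratedDeriv 4 ψ = fun x => (1/B^3) * (c * p x) * (5 * t x - 6 * t x ^ 3) := by
    rw [iteratedDeriv_succ, i3, e4]
  have q : ∀ x, 0 < c * p x := fun x => mul_pos cpos (ppos x)
  have tabs : ∀ x, -1 ≤ t x ∧ t x ≤ 1 := fun x =>
    abs_le.mp ((sq_le_one_iff_abs_le_one _).mp (tlt x))
  have b2 : ∀ x, |iteratedDeriv 2 ψ x| ≤ (1/B) * (c * p x) := by
    intro x
    have := q x
    rw [i2]; dsimp only
    rw [abs_mul, abs_of_pos (by positivity : 0 < (1/B) * (c * p x))]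
    refine mul_le_of_le_one_right (by positivity) ?_
    rw [abs_neg, abs_le]; exact tabs x
  have b3 : ∀ x, |iteratedDeriv 3 ψ x| ≤ (1/B^2) * (c * p x) := by
    intro x
    have := q x
    rw [i3]; dsimp only
    rw [abs_mul, abs_of_pos (by positivity : 0 < (1/B^2) * (c * p x))]
    refine mul_le_of_le_one_right (by positivity) ?_
    rw [abs_le]; constructor <;> nlinarith [tlt x, sq_nonneg (t x)]
  have b4 : ∀ x, |iteratedDeriv 4 ψ x| ≤ (3/B^3) * (c * p x) := by
    intro x
    have := q x
    rw [i4]; dsimp only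
    rw [abs_mul, abs_of_pos (by positivity : 0 < (1/B^3) * (c * p x))]
    have h3 : |5 * t x - 6 * t x ^ 3| ≤ 3 := by
      obtain ⟨h1, h2⟩ := tabs x
      rw [abs_le]
      constructor
      · nlinarith [mul_nonneg (by linarith : 0 ≤ 1 - t x) (sq_nonneg (2 * t x + 1))]
      · nlinarith [mul_nonneg (by linarith : 0 ≤ t x + 1) (sq_nonneg (2 * t x - 1)), mul_nonneg (by linarith : 0 ≤ 1 - t x) (sq_nonneg (2 * t x + 1))]
    calc _ ≤ (1/B^3) * (c * p x) * 3 := mul_le_mul_of_nonneg_left h3 (by positivity)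
      _ = _ := by ring
  have hcd : ∀ x, c * p x ≤ exp (-|x|/B) := fun x =>
    (mul_le_of_le_one_left (ppos x).le cle).trans (hdec x)
  have fin : ∀ x a y, a ≤ 3 → y ≤ a * (c * p x) → y ≤ 3 * exp (-|x|/B) := by
    intro x a y ha hy
    exact hy.trans (mul_le_mul ha (hcd x) (q x).le (by norm_num))
  have dpos : ∀ x, 0 < deriv ψ x := by intro x; rw [e1]; exact q x
  refine ⟨?_, strictMono_of_deriv_pos dpos, dpos, ?_, ?_, ?_, ?_⟩
  · intro x
    have h1 : 0 < arctan (exp (x/B)) := Real.arctan_pos.mpr (exp_pos _)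
    have h2 := Real.arctan_lt_pi_div_two (exp (x/B))
    refine ⟨by simp only [hψ]; positivity, ?_⟩
    simp only [hψ]
    rw [div_mul_eq_mul_div, div_lt_one Real.pi_pos]
    linarith
  · rw [e1]; exact b4
  · rw [e1]; exact b3
  · rw [e1]; exact fun x => (le_abs_self _).trans (b2 x)
  · intro k hk1 hk4 x
    have hpw : ∀ n : ℕ, 1 ≤ B ^ n := fun n => one_le_pow₀ (by linarith)
    interval_cases k
    · refine fin x 1 _ (by norm_num) ?_
      rw [i1]; dsimp only; rw [abs_of_pos (q x), one_mul]
    · refine fin x _ _ ?_ (b2 x)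
      rw [div_le_iff₀ hB]; linarith
    · refine fin x _ _ ?_ (b3 x)
      rw [div_le_iff₀ (by positivity)]; linarith [hpw 2]
    · refine fin x _ _ ?_ (b4 x)
      rw [div_le_iff₀ (by positivity)]; linarith [hpw 3]
end
end

section
/- Let B > 1 and let ψ : ℝ → ℝ be a smooth function whose derivatives ψ', ψ'', ψ''', ψ^{(5)} decay at infinity, with ψ'(x) > 0 and |ψ'''(x)| ≤ (1/B²) ψ'(x) for all x. Let u be a Schwartz function on ℝ, and set û = q * u with q(x) = ¼e^{−2|x|}, and r = p * û with p(x) = ½e^{−|x|}. Then the identity ∫_ℝ û² ψ' dx = ∫_ℝ ( r² + 2 (r')² + (r'')² ) ψ' dx − ∫_ℝ r² ψ''' dx holds, and consequently ∫_ℝ û² ψ' dx ≥ ( 1 − 1/B² ) ∫_ℝ r² ψ' dx. -/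
open MeasureTheory Real Filter Finset
open scoped ENNReal

noncomputable section

/-- Continuous, integrable, bounded. -/
def GoodFn (f : ℝ → ℝ) : Prop := Continuous f ∧ Integrable f ∧ ∃ C, ∀ x, |f x| ≤ C

theorem GoodFn.sub {f g : ℝ → ℝ} (hf : GoodFn f) (hg : GoodFn g) :
    GoodFn (fun x => f x - g x) := by
  obtain ⟨h1, h2, C, h3⟩ := hf
  obtain ⟨k1, k2, D, k3⟩ := hg
  refine ⟨h1.sub k1, h2.sub k2, C + D, fun x => ?_⟩
  exact (abs_sub _ _).trans (add_le_add (h3 x) (k3 x))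

theorem GoodFn.abs {f : ℝ → ℝ} (hf : GoodFn f) : GoodFn (fun x => |f x|) := by
  obtain ⟨h1, h2, C, h3⟩ := hf
  exact ⟨h1.abs, h2.abs, C, fun x => by simpa using h3 x⟩

theorem GoodFn.integrable_mul {f w : ℝ → ℝ} (hf : Integrable f) (hw : Continuous w)
    (hb : ∃ C, ∀ x, |w x| ≤ C) : Integrable (fun x => f x * w x) := by
  obtain ⟨C, hC⟩ := hb
  exact hf.mul_bdd hw.aestronglyMeasurable (ae_of_all _ hC)

theorem GoodFn.integrable3 {f g w : ℝ → ℝ} (hf : GoodFn f) (hg : GoodFn g) (hw : Continuous w)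
    (hb : ∃ C, ∀ x, |w x| ≤ C) : Integrable (fun x => f x * g x * w x) :=
  GoodFn.integrable_mul (GoodFn.integrable_mul hf.2.1 hg.1 hg.2.2) hw hb

theorem GoodFn.convol {k f : ℝ → ℝ} (hk : GoodFn k) (hf : GoodFn f) : GoodFn (convol k f) := by
  have e : _root_.convol k f = MeasureTheory.convolution f k (ContinuousLinearMap.mul ℝ ℝ) volume := by
    ext x
    simp only [_root_.convol, MeasureTheory.convolution, ContinuousLinearMap.mul_apply', mul_comm]
  obtain ⟨h1, h2, C, h3⟩ := hf
  obtain ⟨k1, k2, D, k3⟩ := hk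
  refine ⟨?_, ?_, ∫ y, D * |f y|, fun x => ?_⟩
  · rw [e]
    refine BddAbove.continuous_convolution_right_of_integrable (ContinuousLinearMap.mul ℝ ℝ) ⟨D, ?_⟩ h2 k1
    rintro _ ⟨x, rfl⟩
    exact k3 x
  · rw [e]
    exact h2.integrable_convolution (ContinuousLinearMap.mul ℝ ℝ) k2
  · refine norm_integral_le_of_norm_le (f := fun y => k (x - y) * f y) (h2.abs.const_mul D) (ae_of_all _ fun y => ?_)
    rw [Real.norm_eq_abs, abs_mul]
    exact mul_le_mul_of_nonneg_right (k3 _) (abs_nonneg _)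

theorem integrable_exp_neg_abs (a : ℝ) (ha : 0 < a) : Integrable (fun x : ℝ => Real.exp (-(a*|x|))) := by
  have h1 : IntegrableOn (fun x : ℝ => Real.exp (-(a*|x|))) (Set.Ioi 0) := by
    refine (exp_neg_integrableOn_Ioi 0 ha).congr_fun (fun x hx => ?_) measurableSet_Ioi
    simp only [Set.mem_Ioi] at hx
    simp [abs_of_pos hx]
  have h2 : IntegrableOn (fun x : ℝ => Real.exp (-(a*|x|))) (Set.Iic 0) := by
    refine (integrableOn_exp_mul_Iic ha 0).congr_fun (fun x hx => ?_) measurableSet_Iic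
    simp only [Set.mem_Iic] at hx
    simp [abs_of_nonpos hx]
  have := h2.union h1
  rwa [Set.Iic_union_Ioi, integrableOn_univ] at this

theorem good_pker : GoodFn pker := by
  refine ⟨by unfold pker; fun_prop, ?_, 1/2, fun x => ?_⟩
  · have := (integrable_exp_neg_abs 1 one_pos).const_mul (1/2)
    simp only [one_mul] at this
    exact this
  · unfold pker
    rw [abs_of_pos (by positivity)]
    have : Real.exp (-|x|) ≤ 1 := Real.exp_le_one_iff.2 (by simp)
    linarith

theorem good_qker : GoodFn qker := by
  refine ⟨by unfold qker; fun_prop, ?_, 1/4, fun x => ?_⟩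
  · exact (integrable_exp_neg_abs 2 two_pos).const_mul (1/4)
  · unfold qker
    rw [abs_of_pos (by positivity)]
    have : Real.exp (-(2*|x|)) ≤ 1 := Real.exp_le_one_iff.2 (by simp)
    linarith

theorem good_schwartz (u : SchwartzMap ℝ ℝ) : GoodFn u := by
  refine ⟨u.continuous, u.integrable, ?_⟩
  obtain ⟨C, hC⟩ := u.decay 0 0
  exact ⟨C, fun x => by simpa using hC.2 x⟩

/-- left piece -/
def lpart (f : ℝ → ℝ) (x : ℝ) : ℝ := Real.exp (-x) * ∫ y in Set.Iic x, Real.exp y * f y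
/-- right piece -/
def rpart (f : ℝ → ℝ) (x : ℝ) : ℝ := Real.exp x * ∫ y in Set.Ioi x, Real.exp (-y) * f y

theorem intL {f : ℝ → ℝ} (hf : GoodFn f) (x : ℝ) :
    IntegrableOn (fun y => Real.exp y * f y) (Set.Iic x) := by
  obtain ⟨h1, h2, C, h3⟩ := hf
  have := (integrableOn_exp_mul_Iic one_pos x)
  simp only [one_mul] at this
  exact Integrable.mul_bdd this h1.aestronglyMeasurable (ae_of_all _ h3)

theorem intR {f : ℝ → ℝ} (hf : GoodFn f) (x : ℝ) :
    IntegrableOn (fun y => Real.exp (-y) * f y) (Set.Ioi x) := by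
  obtain ⟨h1, h2, C, h3⟩ := hf
  have := (exp_neg_integrableOn_Ioi x one_pos)
  simp only [neg_mul, one_mul] at this
  exact Integrable.mul_bdd this h1.aestronglyMeasurable (ae_of_all _ h3)

theorem derivL {f : ℝ → ℝ} (hf : GoodFn f) (x : ℝ) :
    HasDerivAt (lpart f) (f x - lpart f x) x := by
  have e : (fun x => ∫ y in Set.Iic x, Real.exp y * f y) =
      fun x => (∫ y in Set.Iic 0, Real.exp y * f y) + ∫ y in (0:ℝ)..x, Real.exp y * f y := by
    ext z
    rw [← intervalIntegral.integral_Iic_sub_Iic (intL hf 0) (intL hf z)]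
    ring
  have hc : Continuous (fun y => Real.exp y * f y) := Real.continuous_exp.mul hf.1
  have hd : HasDerivAt (fun x => ∫ y in Set.Iic x, Real.exp y * f y) (Real.exp x * f x) x := by
    rw [e]
    exact (intervalIntegral.integral_hasDerivAt_right (hc.intervalIntegrable _ _)
      (hc.stronglyMeasurableAtFilter _ _) hc.continuousAt).const_add _
  have h2 : HasDerivAt (fun x : ℝ => Real.exp (-x)) (Real.exp (-x) * (-1)) x :=
    (hasDerivAt_id x).neg.exp
  refine (h2.mul hd).congr_deriv ?_
  have : Real.exp (-x) * Real.exp x = 1 := by rw [← Real.exp_add]; simp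
  unfold lpart
  linear_combination (f x) * this

theorem derivR {f : ℝ → ℝ} (hf : GoodFn f) (x : ℝ) :
    HasDerivAt (rpart f) (rpart f x - f x) x := by
  have e : (fun x => ∫ y in Set.Ioi x, Real.exp (-y) * f y) =
      fun x => (∫ y in Set.Ioi 0, Real.exp (-y) * f y) - ∫ y in (0:ℝ)..x, Real.exp (-y) * f y := by
    ext z
    have := intervalIntegral.integral_interval_add_Ioi (intR hf 0) (intR hf z)
    linarith
  have hc : Continuous (fun y => Real.exp (-y) * f y) := by
    have := hf.1
    fun_prop
  have hd : HasDerivAt (fun x => ∫ y in Set.Ioi x, Real.exp (-y) * f y) (-(Real.exp (-x) * f x)) x := by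
    rw [e]
    exact (intervalIntegral.integral_hasDerivAt_right (hc.intervalIntegrable _ _)
      (hc.stronglyMeasurableAtFilter _ _) hc.continuousAt).const_sub _
  refine ((Real.hasDerivAt_exp x).mul hd).congr_deriv ?_
  have : Real.exp (-x) * Real.exp x = 1 := by rw [← Real.exp_add]; simp
  unfold rpart
  linear_combination (-f x) * this

theorem convol_pker_eq {f : ℝ → ℝ} (hf : GoodFn f) (x : ℝ) :
    convol pker f x = (1/2) * (lpart f x + rpart f x) := by
  have hi : Integrable (fun y => pker (x - y) * f y) := by
    obtain ⟨k1, k2, D, k3⟩ := good_pker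
    exact hf.2.1.bdd_mul (k1.comp (continuous_const.sub continuous_id)).aestronglyMeasurable
      (ae_of_all _ fun y => k3 _)
  unfold convol lpart rpart
  rw [← intervalIntegral.integral_Iic_add_Ioi hi.integrableOn hi.integrableOn (b := x),
    mul_add, ← integral_const_mul, ← integral_const_mul, ← integral_const_mul,
    ← integral_const_mul]
  congr 1
  · refine setIntegral_congr_fun measurableSet_Iic fun y hy => ?_
    simp only [Set.mem_Iic] at hy
    simp only [pker]
    rw [abs_of_nonneg (by linarith), show -(x - y) = -x + y by ring, Real.exp_add]
    ring
  · refine setIntegral_congr_fun measurableSet_Ioi fun y hy => ?_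
    simp only [Set.mem_Ioi] at hy
    simp only [pker]
    rw [abs_of_neg (by linarith), show - -(x - y) = x + -y by ring, Real.exp_add]
    ring

/-- derivative of `p * f` -/
def dconv (f : ℝ → ℝ) (x : ℝ) : ℝ := (1/2) * (rpart f x - lpart f x)

theorem deriv_convol {f : ℝ → ℝ} (hf : GoodFn f) (x : ℝ) :
    HasDerivAt (convol pker f) (dconv f x) x := by
  rw [show convol pker f = fun x => (1/2) * (lpart f x + rpart f x) from
    funext (convol_pker_eq hf)]
  refine (((derivL hf x).add (derivR hf x)).const_mul (1/2)).congr_deriv ?_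
  unfold dconv
  ring

theorem deriv_dconv {f : ℝ → ℝ} (hf : GoodFn f) (x : ℝ) :
    HasDerivAt (dconv f) (convol pker f x - f x) x := by
  rw [convol_pker_eq hf]
  refine (((derivR hf x).sub (derivL hf x)).const_mul (1/2)).congr_deriv ?_
  ring

theorem good_dconv {f : ℝ → ℝ} (hf : GoodFn f) : GoodFn (dconv f) := by
  have hc : Continuous (dconv f) :=
    continuous_iff_continuousAt.2 fun x => (deriv_dconv hf x).continuousAt
  have hb : ∀ x, |dconv f x| ≤ convol pker (fun y => |f y|) x := by
    intro x
    rw [convol_pker_eq hf.abs]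
    have hl : |lpart f x| ≤ lpart (fun y => |f y|) x := by
      unfold lpart
      rw [abs_mul, Real.abs_exp]
      refine mul_le_mul_of_nonneg_left ?_ (Real.exp_pos _).le
      refine (abs_integral_le_integral_abs).trans (le_of_eq ?_)
      simp [abs_mul]
    have hr : |rpart f x| ≤ rpart (fun y => |f y|) x := by
      unfold rpart
      rw [abs_mul, Real.abs_exp]
      refine mul_le_mul_of_nonneg_left ?_ (Real.exp_pos _).le
      refine (abs_integral_le_integral_abs).trans (le_of_eq ?_)
      simp [abs_mul]
    unfold dconv
    rw [abs_le] at *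
    constructor <;> linarith
  obtain ⟨-, g2, C, g3⟩ := good_pker.convol hf.abs
  exact ⟨hc, g2.mono' hc.aestronglyMeasurable (ae_of_all _ hb), C,
    fun x => (hb x).trans ((le_abs_self _).trans (g3 x))⟩

theorem bdd_of_tendsto {w : ℝ → ℝ} (hw : Continuous w)
    (h : Tendsto w (Filter.cocompact ℝ) (nhds 0)) : ∃ C, ∀ x, |w x| ≤ C := by
  let g : ZeroAtInftyContinuousMap ℝ ℝ := ⟨⟨w, hw⟩, h⟩
  exact ⟨‖g.toBCF‖, fun x => g.toBCF.norm_coe_le_norm x⟩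

/-- weighted coercivity identity.  For a positive weight `ψ'` with
`|ψ'''| ≤ ψ'/B²` and Schwartz `u`, setting `û = q*u` and `r = p*û`,
`∫ û² ψ' = ∫ (r² + 2r'² + r''²)ψ' - ∫ r² ψ'''`, whence
`∫ û² ψ' ≥ (1 - 1/B²)∫ r² ψ'`. -/
theorem stmt_18 (B : ℝ) (hB : 1 < B) (ψ : ℝ → ℝ) (hψ : ContDiff ℝ (⊤ : ℕ∞) ψ)
    (hdecay : ∀ k ∈ ({1, 2, 3, 5} : Set ℕ),
      Tendsto (iteratedDeriv k ψ) (Filter.cocompact ℝ) (nhds 0))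
    (hψ'pos : ∀ x, 0 < deriv ψ x)
    (hψ''' : ∀ x, |iteratedDeriv 3 ψ x| ≤ (1/B^2) * deriv ψ x)
    (u : SchwartzMap ℝ ℝ) :
    (∫ x, (convol qker ⇑u x)^2 * deriv ψ x)
      = (∫ x, ((convol pker (convol qker ⇑u) x)^2
          + 2 * (deriv (convol pker (convol qker ⇑u)) x)^2
          + (deriv (deriv (convol pker (convol qker ⇑u))) x)^2) * deriv ψ x)
        - (∫ x, (convol pker (convol qker ⇑u) x)^2 * iteratedDeriv 3 ψ x) ∧
    (1 - 1/B^2) * (∫ x, (convol pker (convol qker ⇑u) x)^2 * deriv ψ x)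
      ≤ ∫ x, (convol qker ⇑u x)^2 * deriv ψ x := by
  have hf : GoodFn (convol qker ⇑u) := good_qker.convol (good_schwartz u)
  generalize convol qker ⇑u = f at *
  have hr : GoodFn (convol pker f) := good_pker.convol hf
  have hs := good_dconv hf
  have hd1 : deriv (convol pker f) = dconv f := funext fun x => (deriv_convol hf x).deriv
  have hd2 : deriv (dconv f) = fun x => convol pker f x - f x :=
    funext fun x => (deriv_dconv hf x).deriv
  rw [hd1, hd2]
  have D1 := deriv_convol hf
  have D2 := deriv_dconv hf
  generalize convol pker f = r at *
  generalize dconv f = s at *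
  have ht : GoodFn (fun x => r x - f x) := hr.sub hf
  have hcd : ∀ k : ℕ, Continuous (iteratedDeriv k ψ) := fun k =>
    hψ.continuous_iteratedDeriv k (by exact_mod_cast le_top)
  have hdd : ∀ (k : ℕ) (x : ℝ), HasDerivAt (iteratedDeriv k ψ) (iteratedDeriv (k+1) ψ x) x := by
    intro k x
    rw [iteratedDeriv_succ]
    exact ((hψ.differentiable_iteratedDeriv k (by exact_mod_cast WithTop.coe_lt_top _)) x).hasDerivAt
  have b1 := bdd_of_tendsto (hcd 1) (hdecay 1 (by simp))
  have b2 := bdd_of_tendsto (hcd 2) (hdecay 2 (by simp))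
  have b3 := bdd_of_tendsto (hcd 3) (hdecay 3 (by simp))
  rw [← iteratedDeriv_one] at *
  have c1 := hcd 1
  have c2 := hcd 2
  have c3 := hcd 3
  have E1 := hdd 1
  have E2 := hdd 2
  simp only [Nat.reduceAdd] at E1 E2
  generalize iteratedDeriv 1 ψ = w1 at *
  generalize iteratedDeriv 2 ψ = w2 at *
  generalize iteratedDeriv 3 ψ = w3 at *
  have Iff := hf.integrable3 hf c1 b1
  have Irr := hr.integrable3 hr c1 b1
  have Iss := hs.integrable3 hs c1 b1
  have Itt := ht.integrable3 ht c1 b1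
  have Irr3 := hr.integrable3 hr c3 b3
  have Irs1 := hr.integrable3 hs c1 b1
  have Irr2 := hr.integrable3 hr c2 b2
  have Ibig : Integrable (fun x => (r x ^ 2 + 2 * s x ^ 2 + (r x - f x) ^ 2) * w1 x) := by
    refine ((Irr.add (Iss.const_mul 2)).add Itt).congr (ae_of_all _ fun x => ?_)
    simp only [Pi.add_apply]
    ring
  simp only [← sq] at Iff Irr Iss Itt Irr3 Irr2
  have key : (∫ x, f x ^ 2 * w1 x) =
      (∫ x, (r x ^ 2 + 2 * s x ^ 2 + (r x - f x) ^ 2) * w1 x) - ∫ x, r x ^ 2 * w3 x := by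
    have hG : ∀ x, HasDerivAt (fun x => -2 * (r x * s x * w1 x) + r x ^ 2 * w2 x)
        (f x ^ 2 * w1 x - ((r x ^ 2 + 2 * s x ^ 2 + (r x - f x) ^ 2) * w1 x) + r x ^ 2 * w3 x) x := by
      intro x
      refine (((((D1 x).mul (D2 x)).mul (E1 x)).const_mul (-2)).add
        (((D1 x).pow 2).mul (E2 x))).congr_deriv ?_
      simp only [Pi.mul_apply, Pi.pow_apply]
      push_cast
      ring
    have h0 := integral_eq_zero_of_hasDerivAt_of_integrable hG
      ((Iff.sub Ibig).add Irr3) ((Irs1.const_mul (-2)).add Irr2)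
    have e1 := integral_add (Iff.sub Ibig) Irr3
    simp only [Pi.sub_apply] at e1
    rw [e1, integral_sub Iff Ibig] at h0
    linarith
  refine ⟨key, ?_⟩
  rw [key]
  have l1 : (∫ x, r x ^ 2 * w1 x) ≤
      ∫ x, (r x ^ 2 + 2 * s x ^ 2 + (r x - f x) ^ 2) * w1 x := by
    refine integral_mono Irr Ibig fun x => ?_
    refine mul_le_mul_of_nonneg_right ?_ (hψ'pos x).le
    nlinarith [sq_nonneg (s x), sq_nonneg (r x - f x)]
  have l2 : (∫ x, r x ^ 2 * w3 x) ≤ (1/B^2) * ∫ x, r x ^ 2 * w1 x := by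
    rw [← integral_const_mul]
    refine integral_mono Irr3 (Irr.const_mul _) fun x => ?_
    have := mul_le_mul_of_nonneg_left ((le_abs_self _).trans (hψ''' x)) (sq_nonneg (r x))
    simp only
    linarith
  linarith
end
end
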